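/- arXiv:1807.08395 — 2 statements merged into one kernel-verified Lean document; each statement's English description precedes it below -/
import Mathlib

section
/- (Lemma 2) Let n ∈ Im(Ca') with g(n,n) = 1 (a point of the pseudosphere S^{2,4}), and let X, Y, Z ∈ Im(Ca') with g(X,n) = g(Y,n) = g(Z,n) = 0 (tangent vectors to S^{2,4} at n). With J X := n×X the Cayley almost complex structure and Ω(X,Y,Z) := g(X×Y, Z), one has Ω(JX, Y, Z) = Ω(X, JY, Z) = Ω(X, Y, JZ); explicitly, g((n×X)×Y, Z) = g(X×(n×Y), Z) = g(X×Y, n×Z). -/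
-- The split octonion algebra Ca' as pairs of real quaternions.
noncomputable section

abbrev Ca : Type := Quaternion ℝ × Quaternion ℝ

namespace Ca

/-- Split octonion multiplication: (a,b)·(c,d) = (ac + (conj d)b, da + b(conj c)). -/
def mul (x y : Ca) : Ca :=
  (x.1 * y.1 + star y.2 * x.2, y.2 * x.1 + x.2 * star y.1)

/-- The unit (1,0). -/
def one : Ca := (1, 0)

/-- Conjugation conj(a,b) = (conj a, −b). -/
def conj (x : Ca) : Ca := (star x.1, -x.2)

/-- Real part Re(a,b) = re a. -/
def re (x : Ca) : ℝ := x.1.re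

/-- Norm form N(a,b) = ‖a‖² − ‖b‖², of signature (4,4). -/
def N (x : Ca) : ℝ := Quaternion.normSq x.1 - Quaternion.normSq x.2

/-- The symmetric bilinear form ⟨x,y⟩ = (N(x+y) − N(x) − N(y))/2. -/
def bil (x y : Ca) : ℝ := (N (x + y) - N x - N y) / 2

/-- The vector cross product on Im(Ca'): X × Y := X·Y + g(X,Y)·1. -/
def cross (X Y : Ca) : Ca := mul X Y + bil X Y • one

end Ca

theorem Ca.bil_eq (x y : Ca) : Ca.bil x y =
    x.1.re * y.1.re + x.1.imI * y.1.imI + x.1.imJ * y.1.imJ + x.1.imK * y.1.imK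
    - (x.2.re * y.2.re + x.2.imI * y.2.imI + x.2.imJ * y.2.imJ + x.2.imK * y.2.imK) := by
  simp only [Ca.bil, Ca.N, Quaternion.normSq_def', Prod.fst_add, Prod.snd_add,
    Quaternion.re_add, Quaternion.imI_add, Quaternion.imJ_add, Quaternion.imK_add]
  ring

set_option maxHeartbeats 4000000 in
/-- Lemma 2: Ω(JX,Y,Z) = Ω(X,JY,Z) = Ω(X,Y,JZ) for the Cayley almost
complex structure J X = n×X on the pseudosphere S^{2,4}. -/
theorem Omega_J_property (n X Y Z : Ca)
    (hn : Ca.re n = 0) (hnn : Ca.bil n n = 1)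
    (hX : Ca.re X = 0) (hY : Ca.re Y = 0) (hZ : Ca.re Z = 0)
    (hXn : Ca.bil X n = 0) (hYn : Ca.bil Y n = 0) (hZn : Ca.bil Z n = 0) :
    Ca.bil (Ca.cross (Ca.cross n X) Y) Z = Ca.bil (Ca.cross X (Ca.cross n Y)) Z ∧
    Ca.bil (Ca.cross X (Ca.cross n Y)) Z = Ca.bil (Ca.cross X Y) (Ca.cross n Z) := by
  have hcross : ∀ A B : Ca, Ca.bil A B = 0 → Ca.cross A B = Ca.mul A B := by
    intro A B h
    simp [Ca.cross, h]
  have hsymm : ∀ A B : Ca, Ca.bil A B = Ca.bil B A := by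
    intro A B
    simp only [Ca.bil_eq]
    ring
  rw [hcross n X (by rw [hsymm, hXn]), hcross n Y (by rw [hsymm, hYn]),
    hcross n Z (by rw [hsymm, hZn])]
  have hone : ∀ (A B C : Ca) , Ca.bil (Ca.cross A B) C
      = Ca.bil (Ca.mul A B) C + Ca.bil A B * Ca.re C := by
    intro A B C
    have e0 : (1 : Quaternion ℝ).re = 1 := rfl
    have e1 : (1 : Quaternion ℝ).imI = 0 := rfl
    have e2 : (1 : Quaternion ℝ).imJ = 0 := rfl
    have e3 : (1 : Quaternion ℝ).imK = 0 := rfl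
    have f0 : (0 : Quaternion ℝ).re = 0 := rfl
    have f1 : (0 : Quaternion ℝ).imI = 0 := rfl
    have f2 : (0 : Quaternion ℝ).imJ = 0 := rfl
    have f3 : (0 : Quaternion ℝ).imK = 0 := rfl
    simp only [Ca.cross, Ca.bil_eq (_ + _), Ca.bil_eq (Ca.mul _ _), Ca.one, Ca.re,
      Prod.fst_add, Prod.snd_add, Prod.smul_fst, Prod.smul_snd,
      Quaternion.re_add, Quaternion.imI_add, Quaternion.imJ_add, Quaternion.imK_add,
      Quaternion.re_smul, Quaternion.imI_smul, Quaternion.imJ_smul, Quaternion.imK_smul,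
      e0, e1, e2, e3, f0, f1, f2, f3, smul_eq_mul]
    ring
  have h3 : Ca.re (Ca.mul n Z) = 0 := by
    have h : Ca.re (Ca.mul n Z) = 2 * Ca.re n * Ca.re Z - Ca.bil Z n := by
      simp only [Ca.mul, Ca.bil_eq, Ca.re]
      simp
      ring
    rw [h, hn, hZn]
    ring
  rw [hone, hone, hone, hZ, h3]
  simp only [Ca.re] at hn hX hY hZ
  simp only [Ca.bil_eq, hn, hX, hY, hZ, mul_zero, zero_mul, zero_add, add_zero] at hXn hYn hZn
  simp only [Ca.bil_eq, Ca.mul, Quaternion.re_add, Quaternion.imI_add, Quaternion.imJ_add,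
    Quaternion.imK_add, Quaternion.re_mul, Quaternion.imI_mul, Quaternion.imJ_mul,
    Quaternion.imK_mul, Quaternion.re_star, Quaternion.imI_star, Quaternion.imJ_star,
    Quaternion.imK_star, hn, hX, hY, hZ, mul_zero, zero_mul, zero_add, add_zero]
  constructor
  · linear_combination
      (2 * (X.1.imI * Z.1.imI + X.1.imJ * Z.1.imJ + X.1.imK * Z.1.imK - X.2.re * Z.2.re - X.2.imI * Z.2.imI - X.2.imJ * Z.2.imJ - X.2.imK * Z.2.imK)) * hYn
      - (2 * (X.1.imI * Y.1.imI + X.1.imJ * Y.1.imJ + X.1.imK * Y.1.imK - X.2.re * Y.2.re - X.2.imI * Y.2.imI - X.2.imJ * Y.2.imJ - X.2.imK * Y.2.imK)) * hZn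
  · linear_combination
      (-2 * (Y.1.imI * Z.1.imI + Y.1.imJ * Z.1.imJ + Y.1.imK * Z.1.imK - Y.2.re * Z.2.re - Y.2.imI * Z.2.imI - Y.2.imJ * Z.2.imJ - Y.2.imK * Z.2.imK)) * hXn
end
end

section
/- (Lemma 3) Let n ∈ Im(Ca') with g(n,n) = 1, and let X, Y, Z ∈ Im(Ca') with g(X,n) = g(Y,n) = g(Z,n) = 0. Then −g(n, X×(Y×Z)) = −g((n×X)×Y, Z); that is, the contraction of the 4-form Ψ(W,X,Y,Z) := −g(W, X×(Y×Z)) with the normal vector n coincides with −Ω(JX,Y,Z), where J X := n×X and Ω(X,Y,Z) := g(X×Y,Z). -/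
-- The split octonion algebra Ca' as pairs of real quaternions.
noncomputable section

theorem Ca.one_re' : (1 : Quaternion ℝ).re = 1 := rfl
theorem Ca.one_imI' : (1 : Quaternion ℝ).imI = 0 := rfl
theorem Ca.one_imJ' : (1 : Quaternion ℝ).imJ = 0 := rfl
theorem Ca.one_imK' : (1 : Quaternion ℝ).imK = 0 := rfl

theorem Ca.re_cross (A B : Ca) (hA : Ca.re A = 0) (hB : Ca.re B = 0) :
    Ca.re (Ca.cross A B) = 0 := by
  simp only [Ca.re] at hA hB
  simp [Ca.re, Ca.cross, Ca.mul, Ca.bil, Ca.N, Ca.one, Quaternion.normSq_def', hA, hB, Ca.one_re', Ca.one_imI', Ca.one_imJ', Ca.one_imK']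
  ring

theorem Ca.bil_cross (A B C : Ca) (hA : Ca.re A = 0) (hB : Ca.re B = 0) (hC : Ca.re C = 0) :
    Ca.bil A (Ca.cross B C) = Ca.bil (Ca.cross A B) C := by
  have key : ∀ x y : Ca, Ca.bil x y = x.1.re * y.1.re + x.1.imI * y.1.imI + x.1.imJ * y.1.imJ
      + x.1.imK * y.1.imK - (x.2.re * y.2.re + x.2.imI * y.2.imI + x.2.imJ * y.2.imJ
      + x.2.imK * y.2.imK) := by
    intro x y
    simp [Ca.bil, Ca.N, Quaternion.normSq_def']
    ring
  simp only [Ca.re] at hA hB hC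
  simp [key, Ca.cross, Ca.mul, Ca.one, hA, hB, hC, Ca.one_re', Ca.one_imI', Ca.one_imJ', Ca.one_imK']
  ring

/-- Lemma 3: ιₙΨ(X,Y,Z) = −Ω(JX,Y,Z), i.e.
−g(n, X×(Y×Z)) = −g((n×X)×Y, Z). -/
theorem iota_Psi_eq (n X Y Z : Ca)
    (hn : Ca.re n = 0) (hnn : Ca.bil n n = 1)
    (hX : Ca.re X = 0) (hY : Ca.re Y = 0) (hZ : Ca.re Z = 0)
    (hXn : Ca.bil X n = 0) (hYn : Ca.bil Y n = 0) (hZn : Ca.bil Z n = 0) :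
    -(Ca.bil n (Ca.cross X (Ca.cross Y Z))) =
      -(Ca.bil (Ca.cross (Ca.cross n X) Y) Z) := by
  rw [Ca.bil_cross n X _ hn hX (Ca.re_cross Y Z hY hZ),
    Ca.bil_cross _ Y Z (Ca.re_cross n X hn hX) hY hZ]
end
end
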